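/- arXiv:1403.2954 — 2 statements merged into one kernel-verified Lean document; each statement's English description precedes it below -/
import Mathlib

section
/- For every β ∈ (0, 1/2) there exist constants C' > 0 and t₀ ∈ (0, 1] such that for all t ∈ (0, t₀], the truncated second moment satisfies ∫_{[−t^β, t^β]} x² dν_t(x) ≤ C' · t^{1 + β(2 − α)}. -/
/-!
Write `ψ` for the characteristic exponent of `μ` and `h v = ∫ min 1 ((x / v) ^ 2) ∂μ`. Comparing
`(x / v) ^ 2` with `1 - cos (x / v)` bounds the truncated second moment of `ν t` at `v` by
`v ^ 2 * (1 - Re (exp (t * ψ (1 / v))))`. Here `-Re ψ (1 / v)` is `O(h v)`, and by Cauchy–Schwarz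
`(Im ψ (1 / v)) ^ 2` is `O(h v / v ^ 2)`, so for `t ≤ v ^ 2` the whole expression is
`O(t * v ^ 2 * h v)`. The assumption on `μ` gives `h v ≤ h (2 * v) + O(v ^ (-α))`, a recursion over
dyadic scales which sums to `h v = O(v ^ (-α))`; then take `v = t ^ β`.
-/

open MeasureTheory

section ElementaryBounds

open Real

lemma one_sub_cos_le_two_mul_min (y : ℝ) : 1 - cos y ≤ 2 * min 1 (y ^ 2) := by
  rw [mul_min_of_nonneg _ _ zero_le_two]
  refine le_min ?_ ?_
  · linarith [neg_one_le_cos y]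
  · linarith [one_sub_sq_div_two_le_cos (x := y), sq_nonneg y]

lemma abs_sin_sub_self_le (y : ℝ) : |sin y - y| ≤ 2 * (|y| * min 1 |y|) := by
  rcases le_total 1 |y| with h | h
  · rw [min_eq_left h, mul_one]
    linarith [abs_sub (sin y) y, abs_sin_le_abs (x := y)]
  · rw [min_eq_right h, abs_sub_comm]
    nlinarith [abs_sub_sin_le y, abs_nonneg y, mul_nonneg (abs_nonneg y) (abs_nonneg y)]

lemma sq_sin_sub_self_le (y : ℝ) : (sin y - y) ^ 2 ≤ 4 * y ^ 2 * min 1 (y ^ 2) := by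
  have hmin : min 1 |y| ^ 2 ≤ min 1 (y ^ 2) :=
    le_min (pow_le_one₀ (by positivity) (min_le_left _ _))
      (sq_abs y ▸ pow_le_pow_left₀ (by positivity) (min_le_right _ _) 2)
  calc (sin y - y) ^ 2 = |sin y - y| ^ 2 := (sq_abs _).symm
    _ ≤ (2 * (|y| * min 1 |y|)) ^ 2 := by gcongr; exact abs_sin_sub_self_le y
    _ = 4 * y ^ 2 * min 1 |y| ^ 2 := by rw [mul_pow, mul_pow, sq_abs]; ring
    _ ≤ 4 * y ^ 2 * min 1 (y ^ 2) := by gcongr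

lemma one_sub_exp_neg_mul_cos_le {a : ℝ} (ha : 0 ≤ a) (b : ℝ) :
    1 - exp (-a) * cos b ≤ a + b ^ 2 / 2 := by
  have hcos : exp (-a) * (1 - cos b) ≤ 1 - cos b :=
    mul_le_of_le_one_left (sub_nonneg.2 (cos_le_one b)) (exp_le_one_iff.2 (neg_nonpos.2 ha))
  linarith [one_sub_le_exp_neg a, one_sub_sq_div_two_le_cos (x := b)]

lemma sq_le_mul_one_sub_cos {y : ℝ} (hy : |y| ≤ π) : y ^ 2 ≤ π ^ 2 / 2 * (1 - cos y) := by
  calc y ^ 2 = π ^ 2 / 2 * (2 / π ^ 2 * y ^ 2) := by field_simp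
    _ ≤ π ^ 2 / 2 * (1 - cos y) := by gcongr; linarith [cos_le_one_sub_mul_cos_sq hy]

lemma le_mul_rpow_neg_of_le_add_two_mul {F : ℝ → ℝ} {γ D : ℝ} (hγ : 0 < γ) (hD : 0 ≤ D)
    (hstep : ∀ v ∈ Set.Ioc (0 : ℝ) (1 / 2), F v ≤ D * v ^ (-γ) + F (2 * v))
    (hbase : ∀ v ∈ Set.Ioc (1 / 2 : ℝ) 1, F v ≤ D) {v : ℝ} (hv : v ∈ Set.Ioc (0 : ℝ) 1) :
    F v ≤ D / (1 - 2 ^ (-γ)) * v ^ (-γ) := by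
  set r : ℝ := 2 ^ (-γ)
  have hr1 : 0 < 1 - r := sub_pos.2 (rpow_lt_one_of_one_lt_of_neg one_lt_two (neg_neg_of_pos hγ))
  set K := D / (1 - r) with hK
  have hDK : D + K * r = K := by rw [hK]; field_simp; ring
  have hKr : 0 ≤ K * r := by positivity
  obtain ⟨n, hn, -⟩ := exists_nat_pow_near_of_lt_one hv.1 hv.2 one_half_pos one_half_lt_one
  have large : ∀ w ∈ Set.Ioc (1 / 2 : ℝ) 1, F w ≤ K * w ^ (-γ) := fun w hw ↦ by
    have hw0 : 0 < w := one_half_pos.trans hw.1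
    calc F w ≤ K := by linarith [hbase w hw]
      _ ≤ K * w ^ (-γ) := le_mul_of_one_le_right (by positivity)
        (one_le_rpow_of_pos_of_le_one_of_nonpos hw0 hw.2 (by linarith))
  induction n generalizing v with
  | zero => exact large v ⟨by simpa using hn, hv.2⟩
  | succ n ih =>
    rcases lt_or_ge (1 / 2) v with hv2 | hv2
    · exact large v ⟨hv2, hv.2⟩
    have hdouble : F (2 * v) ≤ K * (2 * v) ^ (-γ) :=
      ih ⟨by linarith [hv.1], by linarith⟩ (by rw [pow_succ] at hn; linarith)
    calc F v ≤ D * v ^ (-γ) + K * (2 * v) ^ (-γ) := by linarith [hstep v ⟨hv.1, hv2⟩]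
      _ = (D + K * r) * v ^ (-γ) := by rw [mul_rpow zero_le_two hv.1.le]; ring
      _ = K * v ^ (-γ) := by rw [hDK]

end ElementaryBounds

lemma sq_integral_le_integral_mul_integral_of_sq_le_mul {Ω : Type*} [MeasurableSpace Ω]
    {μ : Measure Ω} {f g k : Ω → ℝ} (hf : Integrable f μ) (hg : Integrable g μ)
    (hk : Integrable k μ) (hf0 : 0 ≤ᵐ[μ] f) (hg0 : 0 ≤ᵐ[μ] g)
    (h : ∀ᵐ x ∂μ, k x ^ 2 ≤ f x * g x) :
    (∫ x, k x ∂μ) ^ 2 ≤ (∫ x, f x ∂μ) * ∫ x, g x ∂μ := by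
  have hquad (s : ℝ) :
      0 ≤ (∫ x, f x ∂μ) * (s * s) + 2 * (∫ x, k x ∂μ) * s + ∫ x, g x ∂μ := by
    have hpos : ∀ᵐ x ∂μ, 0 ≤ f x * (s * s) + 2 * k x * s + g x := by
      filter_upwards [hf0, hg0, h] with x hfx hgx hx
      rcases hfx.eq_or_lt with hfx | hfx
      · have hkx : k x = 0 := by simpa [← hfx, sq_nonpos_iff] using hx
        simpa [← hfx, hkx] using hgx
      · refine (mul_nonneg_iff_of_pos_left hfx).1 ?_
        calc 0 ≤ (f x * s + k x) ^ 2 + (f x * g x - k x ^ 2) :=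
              add_nonneg (sq_nonneg _) (sub_nonneg.2 hx)
          _ = f x * (f x * (s * s) + 2 * k x * s + g x) := by ring
    have hquadratic : Integrable (fun x ↦ f x * (s * s)) μ := hf.mul_const _
    have hlinear : Integrable (fun x ↦ 2 * k x * s) μ := (hk.const_mul 2).mul_const s
    have hsum : Integrable (fun x ↦ f x * (s * s) + 2 * k x * s) μ := hquadratic.add hlinear
    rw [← integral_const_mul, ← integral_mul_const, ← integral_mul_const,
      ← integral_add hquadratic hlinear, ← integral_add hsum hg]
    exact integral_nonneg_of_ae hpos
  have hdiscrim := discrim_le_zero hquad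
  rw [discrim] at hdiscrim
  linarith

/-- The second moment of `μ` truncated to `[-v, v]`. -/
noncomputable def truncatedSecondMoment (μ : Measure ℝ) (v : ℝ) : ℝ :=
  ∫ x in Set.Icc (-v) v, x ^ 2 ∂μ

/-- Pruitt's function of a Lévy measure `μ`: it is comparable to
`truncatedSecondMoment μ v / v ^ 2` plus the `μ`-mass of `{x | v < |x|}`, and it controls the
characteristic exponent of `μ` at frequency `1 / v`. -/
noncomputable def pruittFunction (μ : Measure ℝ) (v : ℝ) : ℝ :=
  ∫ x, min 1 ((x / v) ^ 2) ∂μ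

/-- The characteristic exponent of the pure-jump Lévy martingale with Lévy measure `μ`: its
time-`t` law has characteristic function `exp (t * charExponent μ u)`. -/
noncomputable def charExponent (μ : Measure ℝ) (u : ℝ) : ℂ :=
  ∫ x : ℝ, (Complex.exp (Complex.I * (u : ℂ) * (x : ℂ)) - 1 - Complex.I * (u : ℂ) * (x : ℂ)) ∂μ

lemma truncatedSecondMoment_nonneg (μ : Measure ℝ) (v : ℝ) : 0 ≤ truncatedSecondMoment μ v :=
  integral_nonneg fun _ ↦ sq_nonneg _

lemma pruittFunction_nonneg (μ : Measure ℝ) (v : ℝ) : 0 ≤ pruittFunction μ v :=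
  integral_nonneg fun _ ↦ le_min zero_le_one (sq_nonneg _)

section LevyMeasure

variable {μ : Measure ℝ}

lemma integrable_sq_div (hμ : Integrable (fun x : ℝ ↦ x ^ 2) μ) (v : ℝ) :
    Integrable (fun x ↦ (x / v) ^ 2) μ := by
  simpa only [div_pow] using hμ.div_const _

lemma integrable_min_one_sq_div (hμ : Integrable (fun x : ℝ ↦ x ^ 2) μ) (v : ℝ) :
    Integrable (fun x ↦ min 1 ((x / v) ^ 2)) μ := by
  refine (integrable_sq_div hμ v).mono' (by fun_prop) (.of_forall fun x ↦ ?_)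
  rw [Real.norm_of_nonneg (by positivity)]
  exact min_le_right _ _

lemma pruittFunction_le_integral_sq_div (hμ : Integrable (fun x : ℝ ↦ x ^ 2) μ) (v : ℝ) :
    pruittFunction μ v ≤ (∫ x, x ^ 2 ∂μ) / v ^ 2 := by
  calc pruittFunction μ v ≤ ∫ x, (x / v) ^ 2 ∂μ :=
        integral_mono (integrable_min_one_sq_div hμ v) (integrable_sq_div hμ v)
          fun x ↦ min_le_right _ _
    _ = (∫ x, x ^ 2 ∂μ) / v ^ 2 := by simp_rw [div_pow, integral_div]

lemma pruittFunction_le_add_pruittFunction (hμ : Integrable (fun x : ℝ ↦ x ^ 2) μ) (v : ℝ)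
    {w : ℝ} (hw : 0 < w) :
    pruittFunction μ v ≤ truncatedSecondMoment μ w / v ^ 2 + pruittFunction μ w := by
  have hind : Integrable ((Set.Icc (-w) w).indicator fun x ↦ (x / v) ^ 2) μ :=
    (integrable_sq_div hμ v).indicator measurableSet_Icc
  have htrunc : truncatedSecondMoment μ w / v ^ 2
      = ∫ x, (Set.Icc (-w) w).indicator (fun x ↦ (x / v) ^ 2) x ∂μ := by
    simp_rw [integral_indicator measurableSet_Icc, div_pow, integral_div, truncatedSecondMoment]
  rw [htrunc, pruittFunction, pruittFunction,
    ← integral_add hind (integrable_min_one_sq_div hμ w)]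
  refine integral_mono (integrable_min_one_sq_div hμ v)
    (hind.add (integrable_min_one_sq_div hμ w)) fun x ↦ ?_
  by_cases hx : x ∈ Set.Icc (-w) w
  · simp only [Set.indicator_of_mem hx]
    exact (min_le_right _ _).trans (le_add_of_nonneg_right (by positivity))
  · have hxw : 1 ≤ (x / w) ^ 2 := by
      rw [Set.mem_Icc, ← abs_le, not_le] at hx
      rw [div_pow, one_le_div (by positivity), ← sq_abs x]
      gcongr
    simp only [Set.indicator_of_notMem hx, zero_add, min_eq_left hxw]
    exact min_le_left _ _

lemma pruittFunction_le_rpow (hμ : Integrable (fun x : ℝ ↦ x ^ 2) μ) {α C : ℝ} (hα : 0 < α)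
    (hsmall : ∀ v ∈ Set.Ioc (0 : ℝ) 1, truncatedSecondMoment μ v ≤ C * v ^ (2 - α)) {v : ℝ}
    (hv : v ∈ Set.Ioc (0 : ℝ) 1) :
    pruittFunction μ v ≤ 4 * (C + ∫ x, x ^ 2 ∂μ) / (1 - 2 ^ (-α)) * v ^ (-α) := by
  have hC : 0 ≤ C := by
    simpa using (truncatedSecondMoment_nonneg μ 1).trans (hsmall 1 ⟨one_pos, le_rfl⟩)
  refine le_mul_rpow_neg_of_le_add_two_mul hα (by positivity) (fun w hw ↦ ?_) (fun w hw ↦ ?_) hv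
  · have hw0 := hw.1
    have htwo : (2 : ℝ) ^ (-α) ≤ 1 := Real.rpow_le_one_of_one_le_of_nonpos one_le_two (by linarith)
    refine (pruittFunction_le_add_pruittFunction hμ w (w := 2 * w) (by positivity)).trans ?_
    gcongr
    calc truncatedSecondMoment μ (2 * w) / w ^ 2
        ≤ C * (2 * w) ^ (2 - α) / w ^ 2 := by
          gcongr; exact hsmall (2 * w) ⟨by linarith, by linarith [hw.2]⟩
      _ = 4 * (C * 2 ^ (-α)) * w ^ (-α) := by
          rw [sub_eq_add_neg, Real.rpow_add (by positivity), Real.rpow_two,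
            Real.mul_rpow zero_le_two hw0.le]
          field_simp
          ring
      _ ≤ 4 * (C + ∫ x, x ^ 2 ∂μ) * w ^ (-α) := by
          gcongr
          exact le_add_of_le_of_nonneg (mul_le_of_le_one_right hC htwo) (by positivity)
  · have : 0 < w := one_half_pos.trans hw.1
    calc pruittFunction μ w ≤ (∫ x, x ^ 2 ∂μ) / w ^ 2 := pruittFunction_le_integral_sq_div hμ w
      _ ≤ (∫ x, x ^ 2 ∂μ) / (1 / 2) ^ 2 := by gcongr; exact hw.1.le
      _ = 4 * ∫ x, x ^ 2 ∂μ := by ring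
      _ ≤ 4 * (C + ∫ x, x ^ 2 ∂μ) := by gcongr; linarith

lemma re_exp_I_mul_sub_one_sub (u x : ℝ) :
    (Complex.exp (Complex.I * u * x) - 1 - Complex.I * u * x).re = Real.cos (u * x) - 1 := by
  simp [Complex.exp_re]

lemma im_exp_I_mul_sub_one_sub (u x : ℝ) :
    (Complex.exp (Complex.I * u * x) - 1 - Complex.I * u * x).im = Real.sin (u * x) - u * x := by
  simp [Complex.exp_im]

lemma integrable_exp_I_mul_sub_one_sub (hμ : Integrable (fun x : ℝ ↦ x ^ 2) μ) (u : ℝ) :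
    Integrable (fun x : ℝ ↦ Complex.exp (Complex.I * u * x) - 1 - Complex.I * u * x) μ := by
  refine (hμ.const_mul (4 * u ^ 2)).mono' (by fun_prop) (.of_forall fun x ↦ ?_)
  have hcos : |Real.cos (u * x) - 1| ≤ 2 * (u * x) ^ 2 := by
    rw [abs_sub_comm, abs_of_nonneg (sub_nonneg.2 (Real.cos_le_one _))]
    exact (one_sub_cos_le_two_mul_min _).trans (by gcongr; exact min_le_right _ _)
  have hsin : |Real.sin (u * x) - u * x| ≤ 2 * (u * x) ^ 2 := by
    rw [← sq_abs (u * x), sq]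
    exact (abs_sin_sub_self_le _).trans (by gcongr; exact min_le_right _ _)
  refine (Complex.norm_le_abs_re_add_abs_im _).trans ?_
  rw [re_exp_I_mul_sub_one_sub, im_exp_I_mul_sub_one_sub]
  linarith [mul_pow u x 2]

lemma re_charExponent (hμ : Integrable (fun x : ℝ ↦ x ^ 2) μ) (u : ℝ) :
    (charExponent μ u).re = ∫ x, (Real.cos (u * x) - 1) ∂μ := by
  simp_rw [← re_exp_I_mul_sub_one_sub]
  exact (Complex.reCLM.integral_comp_comm (integrable_exp_I_mul_sub_one_sub hμ u)).symm

lemma im_charExponent (hμ : Integrable (fun x : ℝ ↦ x ^ 2) μ) (u : ℝ) :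
    (charExponent μ u).im = ∫ x, (Real.sin (u * x) - u * x) ∂μ := by
  simp_rw [← im_exp_I_mul_sub_one_sub]
  exact (Complex.imCLM.integral_comp_comm (integrable_exp_I_mul_sub_one_sub hμ u)).symm

lemma re_charExponent_nonpos (hμ : Integrable (fun x : ℝ ↦ x ^ 2) μ) (u : ℝ) :
    (charExponent μ u).re ≤ 0 := by
  rw [re_charExponent hμ]
  exact integral_nonpos fun x ↦ sub_nonpos.2 (Real.cos_le_one _)

lemma neg_re_charExponent_inv_le (hμ : Integrable (fun x : ℝ ↦ x ^ 2) μ) (v : ℝ) :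
    -(charExponent μ v⁻¹).re ≤ 2 * pruittFunction μ v := by
  have hint : Integrable (fun x ↦ Real.cos (v⁻¹ * x) - 1) μ := by
    simpa only [RCLike.re_eq_complex_re, re_exp_I_mul_sub_one_sub] using
      (integrable_exp_I_mul_sub_one_sub hμ v⁻¹).re
  rw [re_charExponent hμ, ← integral_neg, pruittFunction, ← integral_const_mul]
  refine integral_mono hint.neg ((integrable_min_one_sq_div hμ v).const_mul 2) fun x ↦ ?_
  simpa [inv_mul_eq_div] using one_sub_cos_le_two_mul_min (x / v)

lemma sq_im_charExponent_inv_le (hμ : Integrable (fun x : ℝ ↦ x ^ 2) μ) (v : ℝ) :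
    (charExponent μ v⁻¹).im ^ 2 ≤ 4 * ((∫ x, x ^ 2 ∂μ) / v ^ 2) * pruittFunction μ v := by
  have hint : Integrable (fun x ↦ Real.sin (v⁻¹ * x) - v⁻¹ * x) μ := by
    simpa only [RCLike.im_eq_complex_im, im_exp_I_mul_sub_one_sub] using
      (integrable_exp_I_mul_sub_one_sub hμ v⁻¹).im
  have hmoment : ∫ x, 4 * (x / v) ^ 2 ∂μ = 4 * ((∫ x, x ^ 2 ∂μ) / v ^ 2) := by
    simp_rw [integral_const_mul, div_pow, integral_div]
  rw [im_charExponent hμ, ← hmoment]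
  refine sq_integral_le_integral_mul_integral_of_sq_le_mul
    ((integrable_sq_div hμ v).const_mul 4) (integrable_min_one_sq_div hμ v) hint
    (.of_forall fun x ↦ by positivity) (.of_forall fun x ↦ by positivity) (.of_forall fun x ↦ ?_)
  simpa only [inv_mul_eq_div] using sq_sin_sub_self_le (x / v)

end LevyMeasure

lemma integrable_cos_mul (ν : Measure ℝ) [IsFiniteMeasure ν] (u : ℝ) :
    Integrable (fun x ↦ Real.cos (u * x)) ν :=
  .of_bound (by fun_prop) 1 (.of_forall fun _ ↦ Real.abs_cos_le_one _)

lemma re_charFun (ν : Measure ℝ) [IsFiniteMeasure ν] (u : ℝ) :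
    (charFun ν u).re = ∫ x, Real.cos (u * x) ∂ν := by
  have hint : Integrable (fun x : ℝ ↦ Complex.exp (u * x * Complex.I)) ν :=
    .of_bound (by fun_prop) 1 (.of_forall fun x ↦ by
      rw [← Complex.ofReal_mul, Complex.norm_exp_ofReal_mul_I])
  rw [charFun_apply_real]
  refine (Complex.reCLM.integral_comp_comm hint).symm.trans (integral_congr_ae ?_)
  exact .of_forall fun x ↦ by simp [Complex.exp_re]

lemma truncatedSecondMoment_le_one_sub_re_charFun (ν : Measure ℝ) [IsProbabilityMeasure ν] {v : ℝ}
    (hv : 0 < v) :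
    truncatedSecondMoment ν v ≤ Real.pi ^ 2 / 2 * v ^ 2 * (1 - (charFun ν v⁻¹).re) := by
  have hint : Integrable (fun x ↦ Real.pi ^ 2 / 2 * v ^ 2 * (1 - Real.cos (v⁻¹ * x))) ν :=
    ((integrable_const 1).sub (integrable_cos_mul ν _)).const_mul _
  have hsq (x : ℝ) (hx : x ∈ Set.Icc (-v) v) :
      x ^ 2 ≤ Real.pi ^ 2 / 2 * v ^ 2 * (1 - Real.cos (v⁻¹ * x)) := by
    have hvx : |v⁻¹ * x| ≤ 1 := by
      rw [abs_mul, abs_of_pos (inv_pos.2 hv), inv_mul_le_one₀ hv]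
      exact abs_le.2 hx
    calc x ^ 2 = v ^ 2 * (v⁻¹ * x) ^ 2 := by field_simp
      _ ≤ v ^ 2 * (Real.pi ^ 2 / 2 * (1 - Real.cos (v⁻¹ * x))) := by
          gcongr
          exact sq_le_mul_one_sub_cos (by linarith [Real.pi_gt_three])
      _ = Real.pi ^ 2 / 2 * v ^ 2 * (1 - Real.cos (v⁻¹ * x)) := by ring
  calc truncatedSecondMoment ν v
      ≤ ∫ x in Set.Icc (-v) v, Real.pi ^ 2 / 2 * v ^ 2 * (1 - Real.cos (v⁻¹ * x)) ∂ν :=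
        setIntegral_mono_on (by fun_prop : Continuous fun x : ℝ ↦ x ^ 2).integrableOn_Icc
          hint.integrableOn measurableSet_Icc hsq
    _ ≤ ∫ x, Real.pi ^ 2 / 2 * v ^ 2 * (1 - Real.cos (v⁻¹ * x)) ∂ν :=
        setIntegral_le_integral hint (.of_forall fun x ↦
          mul_nonneg (by positivity) (sub_nonneg.2 (Real.cos_le_one _)))
    _ = Real.pi ^ 2 / 2 * v ^ 2 * (1 - (charFun ν v⁻¹).re) := by
        rw [integral_const_mul, integral_sub (integrable_const 1) (integrable_cos_mul ν _),
          integral_const, probReal_univ, one_smul, re_charFun]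

lemma truncatedSecondMoment_le_mul_pruittFunction {μ ν : Measure ℝ} [IsProbabilityMeasure ν]
    (hμ : Integrable (fun x : ℝ ↦ x ^ 2) μ) {t v : ℝ} (ht : 0 ≤ t) (hv : 0 < v)
    (hν : charFun ν v⁻¹ = Complex.exp (t * charExponent μ v⁻¹)) :
    truncatedSecondMoment ν v
      ≤ Real.pi ^ 2 * t * (v ^ 2 + t * ∫ x, x ^ 2 ∂μ) * pruittFunction μ v := by
  set a : ℝ := -(charExponent μ v⁻¹).re with ha
  set b : ℝ := (charExponent μ v⁻¹).im
  have ha0 : 0 ≤ a := neg_nonneg.2 (re_charExponent_nonpos hμ _)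
  have hre : (charFun ν v⁻¹).re = Real.exp (-(t * a)) * Real.cos (t * b) := by
    rw [hν, Complex.exp_re, Complex.re_ofReal_mul, Complex.im_ofReal_mul, ha, mul_neg, neg_neg]
  calc truncatedSecondMoment ν v
      ≤ Real.pi ^ 2 / 2 * v ^ 2 * (1 - Real.exp (-(t * a)) * Real.cos (t * b)) :=
        hre ▸ truncatedSecondMoment_le_one_sub_re_charFun ν hv
    _ ≤ Real.pi ^ 2 / 2 * v ^ 2 * (t * a + (t * b) ^ 2 / 2) := by
        gcongr
        exact one_sub_exp_neg_mul_cos_le (by positivity) _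
    _ = Real.pi ^ 2 / 2 * v ^ 2 * (t * a + t ^ 2 * b ^ 2 / 2) := by rw [mul_pow]
    _ ≤ Real.pi ^ 2 / 2 * v ^ 2 * (t * (2 * pruittFunction μ v)
          + t ^ 2 * (4 * ((∫ x, x ^ 2 ∂μ) / v ^ 2) * pruittFunction μ v) / 2) := by
        gcongr
        · exact neg_re_charExponent_inv_le hμ v
        · exact sq_im_charExponent_inv_le hμ v
    _ = Real.pi ^ 2 * t * (v ^ 2 + t * ∫ x, x ^ 2 ∂μ) * pruittFunction μ v := by
        field_simp
        ring

lemma truncatedSecondMoment_le_mul_rpow {μ ν : Measure ℝ} [IsProbabilityMeasure ν]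
    (hμ : Integrable (fun x : ℝ ↦ x ^ 2) μ) {α C : ℝ} (hα : 0 < α)
    (hsmall : ∀ v ∈ Set.Ioc (0 : ℝ) 1, truncatedSecondMoment μ v ≤ C * v ^ (2 - α)) {t v : ℝ}
    (ht : 0 ≤ t) (hv : v ∈ Set.Ioc (0 : ℝ) 1) (htv : t ≤ v ^ 2)
    (hν : charFun ν v⁻¹ = Complex.exp (t * charExponent μ v⁻¹)) :
    truncatedSecondMoment ν v
      ≤ Real.pi ^ 2 * (1 + ∫ x, x ^ 2 ∂μ) * (4 * (C + ∫ x, x ^ 2 ∂μ) / (1 - 2 ^ (-α)))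
        * (t * v ^ (2 - α)) := by
  have hv0 := hv.1
  set K : ℝ := 4 * (C + ∫ x, x ^ 2 ∂μ) / (1 - 2 ^ (-α))
  calc truncatedSecondMoment ν v
      ≤ Real.pi ^ 2 * t * (v ^ 2 + t * ∫ x, x ^ 2 ∂μ) * pruittFunction μ v :=
        truncatedSecondMoment_le_mul_pruittFunction hμ ht hv0 hν
    _ ≤ Real.pi ^ 2 * t * (v ^ 2 + v ^ 2 * ∫ x, x ^ 2 ∂μ) * (K * v ^ (-α)) := by
        gcongr
        · exact pruittFunction_nonneg μ v
        · exact pruittFunction_le_rpow hμ hα hsmall hv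
    _ = Real.pi ^ 2 * (1 + ∫ x, x ^ 2 ∂μ) * K * (t * v ^ (2 - α)) := by
        rw [sub_eq_add_neg, Real.rpow_add hv0, Real.rpow_two]
        ring

theorem small_time_truncated_second_moment_bound_general
    (μ : Measure ℝ)
    (hμ_mom : Integrable (fun x : ℝ => x ^ 2) μ)
    (α C : ℝ) (hα : 0 < α) (hC : 0 < C)
    (hμ_small : ∀ v ∈ Set.Ioc (0 : ℝ) 1,
      ∫ x in Set.Icc (-v) v, x ^ 2 ∂μ ≤ C * v ^ (2 - α))
    (ν : ℝ → Measure ℝ)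
    (hν_prob : ∀ t : ℝ, 0 < t → IsProbabilityMeasure (ν t))
    (hν_char : ∀ t : ℝ, 0 < t → ∀ u : ℝ,
      ∫ x : ℝ, Complex.exp (Complex.I * (u : ℂ) * (x : ℂ)) ∂(ν t) =
        Complex.exp ((t : ℂ) *
          ∫ x : ℝ, (Complex.exp (Complex.I * (u : ℂ) * (x : ℂ)) - 1
            - Complex.I * (u : ℂ) * (x : ℂ)) ∂μ)) :
    ∃ C' > (0 : ℝ), ∀ β ∈ Set.Icc (0 : ℝ) (1 / 2), ∀ t ∈ Set.Ioc (0 : ℝ) 1,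
      ∫ x in Set.Icc (-(t ^ β)) (t ^ β), x ^ 2 ∂(ν t) ≤ C' * t ^ (1 + β * (2 - α)) := by
  have htwo : 0 < 1 - (2 : ℝ) ^ (-α) :=
    sub_pos.2 (Real.rpow_lt_one_of_one_lt_of_neg one_lt_two (neg_neg_of_pos hα))
  refine ⟨Real.pi ^ 2 * (1 + ∫ x, x ^ 2 ∂μ) * (4 * (C + ∫ x, x ^ 2 ∂μ) / (1 - 2 ^ (-α))),
    by positivity, fun β hβ t ht ↦ ?_⟩
  have := hν_prob t ht.1
  have hv : t ^ β ∈ Set.Ioc (0 : ℝ) 1 :=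
    ⟨Real.rpow_pos_of_pos ht.1 β, Real.rpow_le_one ht.1.le ht.2 hβ.1⟩
  have htv : t ≤ (t ^ β) ^ 2 := by
    rw [← Real.rpow_mul_natCast ht.1.le]
    exact Real.self_le_rpow_of_le_one ht.1.le ht.2 (by push_cast; linarith [hβ.2])
  have hchar : charFun (ν t) (t ^ β)⁻¹ = Complex.exp (t * charExponent μ (t ^ β)⁻¹) := by
    rw [charExponent, ← hν_char t ht.1, charFun_apply_real]
    exact integral_congr_ae (.of_forall fun x ↦ by simp only [mul_comm, mul_left_comm])
  have hpow : t ^ (1 + β * (2 - α)) = t * (t ^ β) ^ (2 - α) := by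
    rw [Real.rpow_add ht.1, Real.rpow_one, Real.rpow_mul ht.1.le]
  rw [hpow]
  exact truncatedSecondMoment_le_mul_rpow hμ_mom hα hμ_small ht.1.le hv htv hchar

/-- Small-time bound for the truncated second moment of a pure-jump Lévy distribution:
for every `β ∈ (0, 1/2)` there are `C' > 0` and `t₀ ∈ (0,1]` such that
`∫_{[-t^β, t^β]} x² dν_t ≤ C' · t^{1 + β(2-α)}` for all `t ∈ (0, t₀]`. -/
theorem small_time_truncated_second_moment_bound
    (μ : Measure ℝ)
    (hμ_supp : μ (Set.Icc (-1 : ℝ) 1)ᶜ = 0)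
    (hμ_mom : Integrable (fun x : ℝ => x ^ 2) μ)
    (α C : ℝ) (hα : α ∈ Set.Ioo (0 : ℝ) 2) (hC : 0 < C)
    (hμ_small : ∀ v ∈ Set.Ioc (0 : ℝ) 1,
      ∫ x in Set.Icc (-v) v, x ^ 2 ∂μ ≤ C * v ^ (2 - α))
    (ν : ℝ → Measure ℝ)
    (hν_prob : ∀ t : ℝ, 0 < t → IsProbabilityMeasure (ν t))
    (hν_char : ∀ t : ℝ, 0 < t → ∀ u : ℝ,
      ∫ x : ℝ, Complex.exp (Complex.I * (u : ℂ) * (x : ℂ)) ∂(ν t) =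
        Complex.exp ((t : ℂ) *
          ∫ x : ℝ, (Complex.exp (Complex.I * (u : ℂ) * (x : ℂ)) - 1
            - Complex.I * (u : ℂ) * (x : ℂ)) ∂μ))
    (β : ℝ) (hβ : β ∈ Set.Ioo (0 : ℝ) (1 / 2)) :
    ∃ C' > (0 : ℝ), ∃ t₀ ∈ Set.Ioc (0 : ℝ) 1, ∀ t ∈ Set.Ioc (0 : ℝ) t₀,
      ∫ x in Set.Icc (-(t ^ β)) (t ^ β), x ^ 2 ∂(ν t) ≤ C' * t ^ (1 + β * (2 - α)) := by
  obtain ⟨C', hC', h⟩ := small_time_truncated_second_moment_bound_general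
    μ hμ_mom α C hα.1 hC hμ_small ν hν_prob hν_char
  exact ⟨C', hC', 1, ⟨one_pos, le_rfl⟩, h β ⟨hβ.1.le, hβ.2.le⟩⟩
end

section
/- Define ψ(u) := ∫_ℝ (e^{iux} − 1 − iux) dμ(x) for u ∈ ℝ, which converges absolutely. Let f : ℝ → ℂ be a C^∞ function with compact support such that f(0) = 0 and f′(0) = 0. Then for every t > 0, ∫_ℝ f dν_t = t ∫_ℝ f dμ + (2π)^{−1} ∫_ℝ (𝓕f)(u) · conj( e^{t ψ(u)} − 1 − t ψ(u) ) du, where conj denotes complex conjugation and all integrals appearing converge absolutely. (This is the decomposition (4.5)–(4.6) in the proof of Proposition 4.1: the linearization of the characteristic function exp(tψ) plus an explicit remainder.) -/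
open MeasureTheory

/-!
The Fourier transform `F` of `f` turns both integrals of `f` into integrals over frequencies.
Fourier inversion writes `f x` as a superposition of the waves `e^{-iux}`, and differentiating it
at the origin writes the first-order Taylor remainder of `f` as the same superposition of the
compensated waves `e^{-iux} - 1 + iux`. Integrating the first identity against the law replaces
the wave by the conjugate of the characteristic function `e^{tψ}`; integrating the second against
the Lévy measure replaces it by the conjugate of `ψ`. The difference is the stated remainder.
Both exchanges of integrals are absolutely convergent because the compensated wave is `O(u²x²)`,
where `x²` is `μ`-integrable and `u² F(u)` is Lebesgue integrable.
-/

open Filter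
open scoped ComplexConjugate FourierTransform SchwartzMap

section Fubini

variable {α β E : Type*} [MeasurableSpace α] [MeasurableSpace β]
  {κ : Measure α} [SFinite κ] {m : Measure β} {c : β → ℝ}

theorem integral_integral_swap_of_norm_le_mul [NormedAddCommGroup E] [NormedSpace ℝ E]
    {G : α → β → E} {b : α → ℝ} (hG : StronglyMeasurable (Function.uncurry G))
    (hb : Integrable b κ) (hc : Integrable c m) (hle : ∀ a x, ‖G a x‖ ≤ b a * c x) :
    Integrable (fun x => ∫ a, G a x ∂κ) m ∧ Integrable (fun a => ∫ x, G a x ∂m) κ ∧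
      ∫ x, ∫ a, G a x ∂κ ∂m = ∫ a, ∫ x, G a x ∂m ∂κ := by
  -- `c` vanishes a.e. off a set on which `m` is σ-finite, which reduces the claim to Fubini there.
  let s := hc.aefinStronglyMeasurable.sigmaFiniteSet
  have hs : MeasurableSet s := hc.aefinStronglyMeasurable.measurableSet
  have hzero : ∀ᵐ x ∂m, x ∉ s → ∀ a, G a x = 0 := by
    filter_upwards [(ae_restrict_iff' hs.compl).1
      hc.aefinStronglyMeasurable.ae_eq_zero_compl] with x hx hxs a
    simpa [hx hxs] using hle a x
  have hprod : Integrable (Function.uncurry G) (κ.prod (m.restrict s)) :=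
    (hb.mul_prod hc.restrict).mono' hG.aestronglyMeasurable
      (Eventually.of_forall fun p => hle p.1 p.2)
  have hinner (a : α) : ∫ x in s, G a x ∂m = ∫ x, G a x ∂m :=
    setIntegral_eq_integral_of_ae_compl_eq_zero (hzero.mono fun x hx hxs => hx hxs a)
  have houter : ∀ᵐ x ∂m, x ∉ s → ∫ a, G a x ∂κ = 0 :=
    hzero.mono fun x hx hxs => by simp only [hx hxs, integral_zero]
  refine ⟨IntegrableOn.integrable_of_ae_notMem_eq_zero hprod.integral_prod_right houter, ?_, ?_⟩
  · exact hprod.integral_prod_left.congr (Eventually.of_forall hinner)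
  · rw [← setIntegral_eq_integral_of_ae_compl_eq_zero houter, ← integral_integral_swap hprod]
    simp only [hinner]

theorem integral_eq_integral_mul_conj_integral {g : β → ℂ} {C : ℂ} {F : α → ℂ} {K : α → β → ℂ}
    {b : α → ℝ} (hF : StronglyMeasurable F) (hK : StronglyMeasurable (Function.uncurry K))
    (hb : Integrable (fun a => b a * ‖F a‖) κ) (hc : Integrable c m)
    (hle : ∀ a x, ‖K a x‖ ≤ b a * c x) (hg : ∀ x, g x = C * ∫ a, F a * conj (K a x) ∂κ) :
    Integrable g m ∧ Integrable (fun a => F a * conj (∫ x, K a x ∂m)) κ ∧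
      ∫ x, g x ∂m = C * ∫ a, F a * conj (∫ x, K a x ∂m) ∂κ := by
  have hmeas : StronglyMeasurable (Function.uncurry fun a x => F a * conj (K a x)) :=
    (hF.comp_measurable measurable_fst).mul (Complex.continuous_conj.comp_stronglyMeasurable hK)
  have hdom (a : α) (x : β) : ‖F a * conj (K a x)‖ ≤ b a * ‖F a‖ * c x := by
    rw [norm_mul, RCLike.norm_conj]
    calc ‖F a‖ * ‖K a x‖ ≤ ‖F a‖ * (b a * c x) := by gcongr; exact hle a x
      _ = b a * ‖F a‖ * c x := by ring
  have hconj (a : α) : ∫ x, F a * conj (K a x) ∂m = F a * conj (∫ x, K a x ∂m) := by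
    rw [integral_const_mul, integral_conj]
  obtain ⟨hint, hint', hswap⟩ := integral_integral_swap_of_norm_le_mul hmeas hb hc hdom
  simp only [hconj] at hint' hswap
  refine ⟨(hint.const_mul C).congr (Eventually.of_forall fun x => (hg x).symm), hint', ?_⟩
  simp only [hg, integral_const_mul, hswap]

end Fubini

theorem integrable_pow_mul_of_le {F : ℝ → ℂ} (hF : Continuous F) {k n : ℕ} (hkn : k ≤ n)
    (hn : Integrable fun u : ℝ => (u : ℂ) ^ n * F u) :
    Integrable fun u : ℝ => (u : ℂ) ^ k * F u := by
  have hcont : Continuous fun u : ℝ => (u : ℂ) ^ k * F u := by fun_prop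
  rw [← integrableOn_univ, ← Set.union_compl_self (Set.Icc (-1 : ℝ) 1), integrableOn_union]
  refine ⟨hcont.integrableOn_Icc, hn.norm.integrableOn.mono' hcont.aestronglyMeasurable ?_⟩
  refine (ae_restrict_iff' measurableSet_Icc.compl).2 (Eventually.of_forall fun u hu => ?_)
  have hu : 1 ≤ |u| := by
    by_contra! h
    exact hu (abs_le.1 h.le)
  simp only [norm_mul, norm_pow, Complex.norm_real, Real.norm_eq_abs]
  gcongr

/-- The Fourier transform of `f` in the convention `u ↦ ∫ e^{iux} f(x) dx`. Mathlib's `𝓕` uses the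
kernel `e^{-2πiux}` instead, so that this is its inverse `𝓕⁻` at the frequency `u / 2π`. -/
noncomputable def angularFourier (f : ℝ → ℂ) (u : ℝ) : ℂ :=
  ∫ x : ℝ, Complex.exp (Complex.I * (u : ℂ) * (x : ℂ)) * f x

section AngularFourier

variable {f : ℝ → ℂ}

theorem norm_exp_I_mul_ofReal_mul_ofReal (u x : ℝ) :
    ‖Complex.exp (Complex.I * (u : ℂ) * (x : ℂ))‖ = 1 := by
  rw [mul_assoc, ← Complex.ofReal_mul, Complex.norm_exp_I_mul_ofReal]

theorem integrable_exp_I_mul_mul (hf : Integrable f) (u : ℝ) :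
    Integrable fun x : ℝ => Complex.exp (Complex.I * (u : ℂ) * (x : ℂ)) * f x :=
  hf.bdd_mul (c := 1) (Continuous.aestronglyMeasurable (by fun_prop))
    (Eventually.of_forall fun x => (norm_exp_I_mul_ofReal_mul_ofReal u x).le)

theorem integrable_mul_conj_exp {F : ℝ → ℂ} (hF : Integrable F) (x : ℝ) :
    Integrable fun u : ℝ => F u * conj (Complex.exp (Complex.I * (u : ℂ) * (x : ℂ))) := by
  refine (integrable_exp_I_mul_mul hF (-x)).congr (Eventually.of_forall fun u => ?_)
  simp only [← Complex.exp_conj, map_mul, Complex.conj_I, Complex.conj_ofReal, mul_comm (F u)]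
  congr 2
  push_cast
  ring

theorem angularFourier_eq_fourierInv (f : ℝ → ℂ) (u : ℝ) :
    angularFourier f u = 𝓕⁻ f (u / (2 * Real.pi)) := by
  have hpi : (Real.pi : ℂ) ≠ 0 := Complex.ofReal_ne_zero.2 Real.pi_ne_zero
  rw [angularFourier, Real.fourierInv_eq']
  refine integral_congr_ae (Eventually.of_forall fun x => ?_)
  simp only [smul_eq_mul, RCLike.inner_apply, conj_trivial]
  congr 2
  push_cast
  field_simp

theorem fourierInv_eq_angularFourier (f : ℝ → ℂ) (v : ℝ) :
    𝓕⁻ f v = angularFourier f (2 * Real.pi * v) := by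
  rw [angularFourier_eq_fourierInv, mul_div_cancel_left₀ v Real.two_pi_pos.ne']

theorem continuous_angularFourier (hf : Integrable f) : Continuous (angularFourier f) := by
  refine continuous_of_dominated (bound := fun x => ‖f x‖)
    (fun u => (integrable_exp_I_mul_mul hf u).aestronglyMeasurable)
    (fun u => Eventually.of_forall fun x => ?_) hf.norm
    (Eventually.of_forall fun x => by fun_prop)
  rw [norm_mul, norm_exp_I_mul_ofReal_mul_ofReal, one_mul]

theorem integrable_angularFourier (hf : Integrable f)
    (hF₂ : Integrable fun u : ℝ => (u : ℂ) ^ 2 * angularFourier f u) :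
    Integrable (angularFourier f) := by
  simpa only [pow_zero, one_mul] using
    integrable_pow_mul_of_le (continuous_angularFourier hf) zero_le_two hF₂

theorem integrable_pow_mul_angularFourier (g : 𝓢(ℝ, ℂ)) (k : ℕ) :
    Integrable fun u : ℝ => (u : ℂ) ^ k * angularFourier g u := by
  have hmom : Integrable fun v : ℝ => (v : ℂ) ^ k * (𝓕⁻ g) v := by
    refine (integrable_norm_iff (Continuous.aestronglyMeasurable (by fun_prop))).1 ?_
    simpa only [norm_mul, norm_pow, Complex.norm_real] using (𝓕⁻ g).integrable_pow_mul volume k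
  have hpi : (Real.pi : ℂ) ≠ 0 := Complex.ofReal_ne_zero.2 Real.pi_ne_zero
  refine ((hmom.comp_div Real.two_pi_pos.ne').const_mul ((2 * Real.pi : ℂ) ^ k)).congr
    (Eventually.of_forall fun u => ?_)
  simp only [angularFourier_eq_fourierInv, SchwartzMap.fourierInv_coe]
  rw [← mul_assoc, ← mul_pow]
  push_cast
  rw [mul_div_cancel₀ _ (mul_ne_zero two_ne_zero hpi)]

theorem fourier_eq_integral_comp_div_mul_conj_exp (G : ℝ → ℂ) (x : ℝ) :
    𝓕 G x = (2 * Real.pi : ℂ)⁻¹ *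
      ∫ u : ℝ, G (u / (2 * Real.pi)) * conj (Complex.exp (Complex.I * (u : ℂ) * (x : ℂ))) := by
  have hpi : (Real.pi : ℂ) ≠ 0 := Complex.ofReal_ne_zero.2 Real.pi_ne_zero
  let wave (v : ℝ) : ℂ := Complex.exp (↑(-2 * Real.pi * v * x) * Complex.I) • G v
  have hwave (u : ℝ) :
      G (u / (2 * Real.pi)) * conj (Complex.exp (Complex.I * (u : ℂ) * (x : ℂ))) =
        wave (u / (2 * Real.pi)) := by
    simp only [wave, ← Complex.exp_conj, map_mul, Complex.conj_I, Complex.conj_ofReal, smul_eq_mul]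
    rw [mul_comm]
    congr 2
    push_cast
    field_simp
  calc 𝓕 G x = ∫ v, wave v := Real.fourier_real_eq_integral_exp_smul G x
    _ = (2 * Real.pi : ℂ)⁻¹ * ∫ u : ℝ, wave (u / (2 * Real.pi)) := by
      rw [Measure.integral_comp_div wave, abs_of_pos Real.two_pi_pos, Complex.real_smul]
      push_cast
      rw [inv_mul_cancel_left₀ (mul_ne_zero two_ne_zero hpi)]
    _ = _ := by simp only [hwave]

theorem integrable_fourierInv (hF : Integrable (angularFourier f)) : Integrable (𝓕⁻ f) := by
  simpa only [← fourierInv_eq_angularFourier] using hF.comp_mul_left' Real.two_pi_pos.ne'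

section Inversion

variable (hf_cont : Continuous f) (hf : Integrable f)

include hf_cont hf

theorem fourier_fourierInv_eq_of_integrable_angularFourier (hF : Integrable (angularFourier f)) :
    𝓕 (𝓕⁻ f) = f := by
  refine hf_cont.fourier_fourierInv_eq hf ?_
  simpa only [Real.fourierInv_eq_fourier_neg, neg_neg] using (integrable_fourierInv hF).comp_neg

theorem eq_integral_angularFourier_mul_conj_exp (hF : Integrable (angularFourier f)) (x : ℝ) :
    f x = (2 * Real.pi : ℂ)⁻¹ *
      ∫ u : ℝ, angularFourier f u * conj (Complex.exp (Complex.I * (u : ℂ) * (x : ℂ))) := by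
  simp only [angularFourier_eq_fourierInv]
  rw [← fourier_eq_integral_comp_div_mul_conj_exp,
    fourier_fourierInv_eq_of_integrable_angularFourier hf_cont hf hF]

theorem apply_zero_eq_integral_angularFourier (hF : Integrable (angularFourier f)) :
    f 0 = (2 * Real.pi : ℂ)⁻¹ * ∫ u, angularFourier f u := by
  simpa using eq_integral_angularFourier_mul_conj_exp hf_cont hf hF 0

theorem hasDerivAt_of_integrable_mul_angularFourier (hF : Integrable (angularFourier f))
    (hF₁ : Integrable fun u : ℝ => (u : ℂ) * angularFourier f u) (x : ℝ) :
    HasDerivAt f ((2 * Real.pi : ℂ)⁻¹ * ∫ u : ℝ, -(Complex.I * (u * angularFourier f u)) *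
      conj (Complex.exp (Complex.I * (u : ℂ) * (x : ℂ)))) x := by
  have hpi : (Real.pi : ℂ) ≠ 0 := Complex.ofReal_ne_zero.2 Real.pi_ne_zero
  have hinv₁ : Integrable fun v : ℝ => v • (𝓕⁻ f) v := by
    refine ((hF₁.comp_mul_left' Real.two_pi_pos.ne').const_mul (2 * Real.pi : ℂ)⁻¹).congr
      (Eventually.of_forall fun v => ?_)
    simp only [fourierInv_eq_angularFourier, Complex.real_smul]
    push_cast
    field_simp
  have hderiv := Real.hasDerivAt_fourier (integrable_fourierInv hF) hinv₁ x
  rw [fourier_fourierInv_eq_of_integrable_angularFourier hf_cont hf hF,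
    fourier_eq_integral_comp_div_mul_conj_exp] at hderiv
  convert! hderiv using 5
  rw [angularFourier_eq_fourierInv, smul_eq_mul]
  push_cast
  field_simp

end Inversion

end AngularFourier

/-- The compensated character `e^{iux} - 1 - iux`, whose integral against the Lévy measure is the
characteristic exponent of a centred pure-jump Lévy process. -/
noncomputable def compensatedExp (u x : ℝ) : ℂ :=
  Complex.exp (Complex.I * (u : ℂ) * (x : ℂ)) - 1 - Complex.I * (u : ℂ) * (x : ℂ)

theorem continuous_uncurry_compensatedExp : Continuous (Function.uncurry compensatedExp) := by
  simp only [Function.uncurry_def, compensatedExp]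
  fun_prop

theorem norm_exp_I_mul_ofReal_sub_one_sub_le (y : ℝ) :
    ‖Complex.exp (Complex.I * (y : ℂ)) - 1 - Complex.I * (y : ℂ)‖ ≤ 2 * y ^ 2 := by
  have hnorm : ‖Complex.I * (y : ℂ)‖ = |y| := by simp
  rw [← sq_abs y]
  rcases le_total |y| 1 with hy | hy
  · have hsmall := Complex.norm_exp_sub_one_sub_id_le (hnorm.trans_le hy)
    rw [hnorm] at hsmall
    linarith [sq_nonneg |y|]
  · calc ‖Complex.exp (Complex.I * (y : ℂ)) - 1 - Complex.I * (y : ℂ)‖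
        ≤ ‖Complex.exp (Complex.I * (y : ℂ)) - 1‖ + ‖Complex.I * (y : ℂ)‖ := norm_sub_le _ _
      _ ≤ |y| + |y| := add_le_add Real.norm_exp_I_mul_ofReal_sub_one_le hnorm.le
      _ ≤ 2 * |y| ^ 2 := by nlinarith

theorem norm_compensatedExp_le (u x : ℝ) : ‖compensatedExp u x‖ ≤ 2 * u ^ 2 * x ^ 2 := by
  have hbound := norm_exp_I_mul_ofReal_sub_one_sub_le (u * x)
  rwa [Complex.ofReal_mul, ← mul_assoc, mul_pow, ← mul_assoc] at hbound

theorem integrable_compensatedExp {μ : Measure ℝ} (hμ : Integrable (fun x : ℝ => x ^ 2) μ)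
    (u : ℝ) : Integrable (compensatedExp u) μ :=
  (hμ.const_mul (2 * u ^ 2)).mono'
    (continuous_uncurry_compensatedExp.uncurry_left u).aestronglyMeasurable
    (Eventually.of_forall (norm_compensatedExp_le u))

/-- The characteristic exponent `ψ(u) = ∫ (e^{iux} - 1 - iux) dμ(x)` of the pure-jump Lévy
martingale with Lévy measure `μ`. -/
noncomputable def levyExponent (μ : Measure ℝ) (u : ℝ) : ℂ :=
  ∫ x, compensatedExp u x ∂μ

theorem charFun_eq_integral_exp_I_mul (ν : Measure ℝ) (u : ℝ) :
    charFun ν u = ∫ x : ℝ, Complex.exp (Complex.I * (u : ℂ) * (x : ℂ)) ∂ν := by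
  rw [charFun_apply_real]
  congr! 3 with x
  ring

section Decomposition

variable {f : ℝ → ℂ} (hf_cont : Continuous f) (hf : Integrable f)

include hf_cont hf

theorem integral_eq_integral_angularFourier_mul_conj_charFun (ν : Measure ℝ) [IsFiniteMeasure ν]
    (hF : Integrable (angularFourier f)) :
    Integrable f ν ∧ Integrable (fun u => angularFourier f u * conj (charFun ν u)) ∧
      ∫ x, f x ∂ν = (2 * Real.pi : ℂ)⁻¹ * ∫ u, angularFourier f u * conj (charFun ν u) := by
  simp only [charFun_eq_integral_exp_I_mul]
  refine integral_eq_integral_mul_conj_integral (b := fun _ => 1) (c := fun _ => 1)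
    (K := fun u x : ℝ => Complex.exp (Complex.I * (u : ℂ) * (x : ℂ)))
    (continuous_angularFourier hf).stronglyMeasurable ?_ (by simpa only [one_mul] using hF.norm)
    (integrable_const 1) (fun u x => ?_) (eq_integral_angularFourier_mul_conj_exp hf_cont hf hF)
  · refine Continuous.stronglyMeasurable ?_
    simp only [Function.uncurry_def]
    fun_prop
  · rw [norm_exp_I_mul_ofReal_mul_ofReal, one_mul]

variable (hF₂ : Integrable fun u : ℝ => (u : ℂ) ^ 2 * angularFourier f u)

include hF₂

theorem sub_sub_deriv_eq_integral_angularFourier_mul_conj_compensatedExp (x : ℝ) :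
    f x - f 0 - x * deriv f 0 =
      (2 * Real.pi : ℂ)⁻¹ * ∫ u, angularFourier f u * conj (compensatedExp u x) := by
  have hF := integrable_angularFourier hf hF₂
  have hF₁ : Integrable fun u : ℝ => (u : ℂ) * angularFourier f u := by
    simpa only [pow_one] using
      integrable_pow_mul_of_le (continuous_angularFourier hf) one_le_two hF₂
  have hwave := integrable_mul_conj_exp hF x
  have hdiff : Integrable fun u : ℝ => angularFourier f u *
      conj (Complex.exp (Complex.I * (u : ℂ) * (x : ℂ))) - angularFourier f u := hwave.sub hF
  have hsplit (u : ℝ) : angularFourier f u * conj (compensatedExp u x) =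
      angularFourier f u * conj (Complex.exp (Complex.I * (u : ℂ) * (x : ℂ))) -
        angularFourier f u + x * (Complex.I * (u * angularFourier f u)) := by
    simp only [compensatedExp, map_sub, map_mul, map_one, Complex.conj_I, Complex.conj_ofReal]
    ring
  have hderiv : deriv f 0 =
      (2 * Real.pi : ℂ)⁻¹ * ∫ u : ℝ, -(Complex.I * (u * angularFourier f u)) := by
    simpa using (hasDerivAt_of_integrable_mul_angularFourier hf_cont hf hF hF₁ 0).deriv
  simp only [hsplit]
  rw [integral_add hdiff ((hF₁.const_mul _).const_mul _), integral_sub hwave hF,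
    integral_const_mul, eq_integral_angularFourier_mul_conj_exp hf_cont hf hF x,
    apply_zero_eq_integral_angularFourier hf_cont hf hF, hderiv, integral_neg]
  ring

theorem integral_sub_sub_deriv_eq_integral_angularFourier_mul_conj_levyExponent {μ : Measure ℝ}
    (hμ : Integrable (fun x : ℝ => x ^ 2) μ) :
    Integrable (fun x : ℝ => f x - f 0 - x * deriv f 0) μ ∧
      Integrable (fun u => angularFourier f u * conj (levyExponent μ u)) ∧
      ∫ x : ℝ, (f x - f 0 - x * deriv f 0) ∂μ =
        (2 * Real.pi : ℂ)⁻¹ * ∫ u, angularFourier f u * conj (levyExponent μ u) := by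
  refine integral_eq_integral_mul_conj_integral (b := fun u => 2 * u ^ 2)
    (continuous_angularFourier hf).stronglyMeasurable
    continuous_uncurry_compensatedExp.stronglyMeasurable ?_ hμ norm_compensatedExp_le
    (sub_sub_deriv_eq_integral_angularFourier_mul_conj_compensatedExp hf_cont hf hF₂)
  simpa [mul_assoc] using hF₂.norm.const_mul 2

theorem linearization_decomposition_general {μ ν : Measure ℝ} [IsFiniteMeasure ν]
    (hμ : Integrable (fun x : ℝ => x ^ 2) μ) {t : ℝ}
    (hν : ∀ u, charFun ν u = Complex.exp (t * levyExponent μ u)) :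
    Integrable f ν ∧ Integrable (fun x : ℝ => f x - f 0 - x * deriv f 0) μ ∧
      Integrable (fun u => angularFourier f u *
        conj (Complex.exp (t * levyExponent μ u) - 1 - t * levyExponent μ u)) ∧
      ∫ x, f x ∂ν = f 0 + t * ∫ x : ℝ, (f x - f 0 - x * deriv f 0) ∂μ +
        (2 * Real.pi : ℂ)⁻¹ * ∫ u, angularFourier f u *
          conj (Complex.exp (t * levyExponent μ u) - 1 - t * levyExponent μ u) := by
  have hF := integrable_angularFourier hf hF₂
  obtain ⟨hfν, hFν, hlaw⟩ :=
    integral_eq_integral_angularFourier_mul_conj_charFun hf_cont hf ν hF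
  obtain ⟨hfμ, hFμ, hgen⟩ :=
    integral_sub_sub_deriv_eq_integral_angularFourier_mul_conj_levyExponent hf_cont hf hF₂ hμ
  have hdiff : Integrable fun u => angularFourier f u * conj (charFun ν u) - angularFourier f u :=
    hFν.sub hF
  have hsplit (u : ℝ) : angularFourier f u *
      conj (Complex.exp (t * levyExponent μ u) - 1 - t * levyExponent μ u) =
        angularFourier f u * conj (charFun ν u) - angularFourier f u -
          t * (angularFourier f u * conj (levyExponent μ u)) := by
    simp only [hν, map_sub, map_mul, map_one, Complex.conj_ofReal]
    ring
  simp only [hsplit]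
  refine ⟨hfν, hfμ, hdiff.sub (hFμ.const_mul _), ?_⟩
  rw [integral_sub hdiff (hFμ.const_mul _), integral_sub hFν hF, integral_const_mul,
    hlaw, hgen, apply_zero_eq_integral_angularFourier hf_cont hf hF]
  ring

end Decomposition

/-- Decomposition (4.5)–(4.6) in the proof of Proposition 4.1: with
`ψ(u) = ∫ (e^{iux} - 1 - iux) dμ(x)` (absolutely convergent) and a smooth compactly
supported `f : ℝ → ℂ` with `f(0) = 0` and `f'(0) = 0`, for every `t > 0`,
`∫ f dν_t = t ∫ f dμ + (2π)⁻¹ ∫ (𝓕f)(u) · conj(e^{tψ(u)} - 1 - tψ(u)) du`,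
all integrals appearing being absolutely convergent. -/
theorem linearization_decomposition
    (μ : Measure ℝ)
    (hμ_supp : μ (Set.Icc (-1 : ℝ) 1)ᶜ = 0)
    (hμ_mom : Integrable (fun x : ℝ => x ^ 2) μ)
    (ν : ℝ → Measure ℝ)
    (hν_prob : ∀ t : ℝ, 0 < t → IsProbabilityMeasure (ν t))
    (hν_char : ∀ t : ℝ, 0 < t → ∀ u : ℝ,
      ∫ x : ℝ, Complex.exp (Complex.I * (u : ℂ) * (x : ℂ)) ∂(ν t) =
        Complex.exp ((t : ℂ) *
          ∫ x : ℝ, (Complex.exp (Complex.I * (u : ℂ) * (x : ℂ)) - 1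
            - Complex.I * (u : ℂ) * (x : ℂ)) ∂μ))
    (f : ℝ → ℂ) (hf_smooth : ContDiff ℝ (⊤ : ℕ∞) f) (hf_supp : HasCompactSupport f)
    (hf0 : f 0 = 0) (hf'0 : deriv f 0 = 0)
    (t : ℝ) (ht : 0 < t) :
    (∀ u : ℝ, Integrable (fun x : ℝ =>
        Complex.exp (Complex.I * (u : ℂ) * (x : ℂ)) - 1
          - Complex.I * (u : ℂ) * (x : ℂ)) μ) ∧
    Integrable f (ν t) ∧
    Integrable f μ ∧
    (∀ u : ℝ, Integrable (fun x : ℝ =>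
        Complex.exp (Complex.I * (u : ℂ) * (x : ℂ)) * f x) volume) ∧
    Integrable (fun u : ℝ =>
        (∫ x : ℝ, Complex.exp (Complex.I * (u : ℂ) * (x : ℂ)) * f x) *
          (starRingEnd ℂ)
            (Complex.exp ((t : ℂ) *
                ∫ x : ℝ, (Complex.exp (Complex.I * (u : ℂ) * (x : ℂ)) - 1
                  - Complex.I * (u : ℂ) * (x : ℂ)) ∂μ) - 1 -
              (t : ℂ) *
                ∫ x : ℝ, (Complex.exp (Complex.I * (u : ℂ) * (x : ℂ)) - 1
                  - Complex.I * (u : ℂ) * (x : ℂ)) ∂μ)) volume ∧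
    ∫ x : ℝ, f x ∂(ν t) =
      (t : ℂ) * ∫ x : ℝ, f x ∂μ +
        (2 * Real.pi : ℂ)⁻¹ *
          ∫ u : ℝ,
            (∫ x : ℝ, Complex.exp (Complex.I * (u : ℂ) * (x : ℂ)) * f x) *
              (starRingEnd ℂ)
                (Complex.exp ((t : ℂ) *
                    ∫ x : ℝ, (Complex.exp (Complex.I * (u : ℂ) * (x : ℂ)) - 1
                      - Complex.I * (u : ℂ) * (x : ℂ)) ∂μ) - 1 -
                  (t : ℂ) *
                    ∫ x : ℝ, (Complex.exp (Complex.I * (u : ℂ) * (x : ℂ)) - 1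
                      - Complex.I * (u : ℂ) * (x : ℂ)) ∂μ) := by
  have hf := hf_smooth.continuous.integrable_of_hasCompactSupport (μ := volume) hf_supp
  have hF₂ := integrable_pow_mul_angularFourier (hf_supp.toSchwartzMap hf_smooth) 2
  have := hν_prob t ht
  obtain ⟨hfν, hfμ, hrem, heq⟩ := linearization_decomposition_general hf_smooth.continuous hf hF₂
    hμ_mom fun u => (charFun_eq_integral_exp_I_mul (ν t) u).trans (hν_char t ht u)
  simp only [hf0, hf'0, mul_zero, sub_zero, zero_add] at hfμ heq
  exact ⟨integrable_compensatedExp hμ_mom, hfν, hfμ, integrable_exp_I_mul_mul hf, hrem, heq⟩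
end
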